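/- For every d ≥ 1, setting D = 2^d, there exists a set A ⊆ {0,1}^D such that every y ∈ {0,1}^D is at Hamming distance exactly 1 from exactly one element of A; that is, the spheres S_a = { y : y differs from a in exactly one coordinate }, for a ∈ A, partition {0,1}^D. -/

import Mathlib

/-!
The set `A` is the kernel of a Hamming-type code that uses the zero label as well. Label the
`2 ^ d` coordinates bijectively by the vectors of `𝔽₂ ^ d`, and let the syndrome of `y` be the sum
of the labels of the coordinates where `y` is `true`. Flipping a coordinate of `y` adds its label
to the syndrome (`syndrome_flip_add`). Hence the neighbour of `y` obtained by flipping a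
coordinate has syndrome zero iff the label of that coordinate is the syndrome of `y`, and exactly
one coordinate carries this label. So the set of points of syndrome zero works.
-/

/-- A literal over `n` variables: a coordinate `x_i` (if `neg = false`)
or its negation `¬ x_i` (if `neg = true`). -/
structure Lit (n : ℕ) where
  idx : Fin n
  neg : Bool
deriving DecidableEq

/-- Evaluation of a literal at an assignment. -/
def Lit.eval {n : ℕ} (l : Lit n) (x : Fin n → Bool) : Bool :=
  if l.neg then !(x l.idx) else x l.idx

/-- A clause: a finite set of literals, evaluated as their disjunction. -/
abbrev Clause (n : ℕ) := Finset (Lit n)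

/-- A CNF formula: a finite set of clauses, evaluated as their conjunction.
Its size is its number of clauses (`Finset.card`). -/
abbrev CNF (n : ℕ) := Finset (Clause n)

/-- `φ.sat x` means the CNF formula `φ` evaluates to `1` at `x`. -/
def CNF.sat {n : ℕ} (φ : CNF n) (x : Fin n → Bool) : Prop :=
  ∀ c ∈ φ, ∃ l ∈ c, l.eval x = true

instance {n : ℕ} (φ : CNF n) (x : Fin n → Bool) : Decidable (φ.sat x) :=
  inferInstanceAs (Decidable (∀ c ∈ φ, ∃ l ∈ c, Lit.eval l x = true))

/-- `φ⁻¹(1) ⊆ f⁻¹(1)`: the formula does not err on inputs where `f` is `0`. -/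
def CNF.onesided {n : ℕ} (φ : CNF n) (f : (Fin n → Bool) → Bool) : Prop :=
  ∀ x, φ.sat x → f x = true

/-- A CNF formula is monotone if none of its literals is negated. -/
def CNF.mono {n : ℕ} (φ : CNF n) : Prop :=
  ∀ c ∈ φ, ∀ l ∈ c, l.neg = false

/-- A distribution on `f⁻¹(1)`: nonnegative, supported on `f⁻¹(1)`, summing to 1. -/
def IsDistOn {n : ℕ} (μ : (Fin n → Bool) → ℝ) (f : (Fin n → Bool) → Bool) : Prop :=
  (∀ x, 0 ≤ μ x) ∧ (∀ x, f x = false → μ x = 0) ∧ (∑ x, μ x) = 1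

/-- `Pr_{x ∼ μ}[φ(x) = 1]`. -/
noncomputable def CNF.pr {n : ℕ} (φ : CNF n) (μ : (Fin n → Bool) → ℝ) : ℝ :=
  ∑ x, if φ.sat x then μ x else 0

/-- `D_μ(f)`: the maximum, over CNF formulas `φ` with `φ⁻¹(1) ⊆ f⁻¹(1)` and `|φ| ≥ 1`,
of `Pr_{x∼μ}[φ(x)=1] / |φ|` (0 if there is no such formula). -/
noncomputable def Dmu {n : ℕ} (f : (Fin n → Bool) → Bool) (μ : (Fin n → Bool) → ℝ) : ℝ :=
  sSup {r : ℝ | ∃ φ : CNF n, φ.onesided f ∧ 1 ≤ φ.card ∧ r = φ.pr μ / φ.card}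

/-- `D(f)`: the minimum of `D_μ(f)` over distributions `μ` on `f⁻¹(1)`. -/
noncomputable def Dof {n : ℕ} (f : (Fin n → Bool) → Bool) : ℝ :=
  sInf {r : ℝ | ∃ μ, IsDistOn μ f ∧ r = Dmu f μ}

/-- The monotone variant `D⁺_μ(f)`, restricted to monotone CNF formulas. -/
noncomputable def DmuPlus {n : ℕ} (f : (Fin n → Bool) → Bool) (μ : (Fin n → Bool) → ℝ) : ℝ :=
  sSup {r : ℝ | ∃ φ : CNF n, φ.mono ∧ φ.onesided f ∧ 1 ≤ φ.card ∧ r = φ.pr μ / φ.card}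

/-- `D⁺(f)`: the minimum of `D⁺_μ(f)` over distributions `μ` on `f⁻¹(1)`. -/
noncomputable def DPlus {n : ℕ} (f : (Fin n → Bool) → Bool) : ℝ :=
  sInf {r : ℝ | ∃ μ, IsDistOn μ f ∧ r = DmuPlus f μ}

/-- A list of CNF formulas computes `f` as their pointwise disjunction. -/
def ComputedByOr {n : ℕ} (L : List (CNF n)) (f : (Fin n → Bool) → Bool) : Prop :=
  ∀ x, f x = true ↔ ∃ φ ∈ L, φ.sat x

/-- `L₃(f)`: the minimum size (total number of clauses) of a depth-3 formula computing `f`. -/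
noncomputable def L3 {n : ℕ} (f : (Fin n → Bool) → Bool) : ℕ :=
  sInf {s : ℕ | ∃ L : List (CNF n), ComputedByOr L f ∧ s = (L.map Finset.card).sum}

/-- `L₃⁺(f)`: the minimum size of a depth-3 monotone formula computing `f`. -/
noncomputable def L3Plus {n : ℕ} (f : (Fin n → Bool) → Bool) : ℕ :=
  sInf {s : ℕ | ∃ L : List (CNF n), (∀ φ ∈ L, φ.mono) ∧ ComputedByOr L f ∧
    s = (L.map Finset.card).sum}

/-- The number of ones in a Boolean input. -/
def ones {n : ℕ} (x : Fin n → Bool) : ℕ := (Finset.univ.filter fun i => x i = true).card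

/-- The parity function: `1` iff the number of ones is odd. -/
def parityF (n : ℕ) : (Fin n → Bool) → Bool := fun x => decide (ones x % 2 = 1)

/-- The majority function: `1` iff the number of ones is at least `n/2`. -/
def majF (n : ℕ) : (Fin n → Bool) → Bool := fun x => decide (n ≤ 2 * ones x)

/-- `Pr_{x uniform in f⁻¹(1)}[φ(x) = 1]`. -/
noncomputable def prUnif {n : ℕ} (f : (Fin n → Bool) → Bool) (φ : CNF n) : ℝ :=
  ((Finset.univ.filter fun x => f x = true ∧ φ.sat x).card : ℝ) /
    ((Finset.univ.filter fun x => f x = true).card : ℝ)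

/-- `x` is an isolated solution of `φ`: `φ(x)=1` and `φ(y)=0` for every `y`
differing from `x` in exactly one coordinate. -/
def IsIsolated {n : ℕ} (φ : CNF n) (x : Fin n → Bool) : Prop :=
  φ.sat x ∧ ∀ y : Fin n → Bool, hammingDist x y = 1 → ¬ φ.sat y

/-- The point `y` with its coordinate `i` negated. -/
def flipAt {ι : Type*} [DecidableEq ι] (y : ι → Bool) (i : ι) : ι → Bool :=
  Function.update y i (!y i)

theorem hammingDist_eq_one_iff_flipAt {ι : Type*} [Fintype ι] [DecidableEq ι] (y a : ι → Bool) :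
    hammingDist y a = 1 ↔ ∃ i, a = flipAt y i := by
  unfold hammingDist flipAt
  rw [Finset.card_eq_one]
  refine exists_congr fun i => ?_
  constructor
  · intro h
    funext j
    have hj : y j ≠ a j ↔ j = i := by simpa using Finset.ext_iff.1 h j
    by_cases hji : j = i
    · subst hji
      have := hj.2 rfl
      revert this
      simp only [Function.update_self]
      cases y j <;> cases a j <;> simp
    · have : y j = a j := by by_contra hne; exact hji (hj.1 hne)
      simp [Function.update_of_ne hji, this]
  · rintro rfl
    ext j
    by_cases hji : j = i
    · subst hji; simp
    · simp [hji]

/-- The sum of the labels `e i` over the coordinates `i` at which `y` is `true`. -/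
def syndrome {ι G : Type*} [Fintype ι] [AddCommMonoid G] (e : ι → G) (y : ι → Bool) : G :=
  ∑ i, if y i then e i else 0

theorem syndrome_flip_add {ι G : Type*} [Fintype ι] [DecidableEq ι] [AddCommGroup G]
    (hG : ∀ g : G, g + g = 0) (e : ι → G) (y : ι → Bool) (i : ι) :
    syndrome e (flipAt y i) + syndrome e y = e i := by
  unfold syndrome flipAt
  rw [← Finset.sum_add_distrib, Finset.sum_eq_single i]
  · cases y i <;> simp
  · intro j _ hji
    simp only [Function.update_of_ne hji]
    exact hG _
  · simp

/-- perfect covering of `{0,1}^D`, `D = 2^d`, by Hamming spheres of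
radius 1 (Hamming code): every point is at distance exactly 1 from exactly one center. -/
theorem stmt13 (d : ℕ) (hd : 1 ≤ d) :
    ∃ A : Set (Fin (2 ^ d) → Bool), ∀ y : Fin (2 ^ d) → Bool,
      ∃! a : Fin (2 ^ d) → Bool, a ∈ A ∧ hammingDist y a = 1 := by
  have e : Fin (2 ^ d) ≃ (Fin d → ZMod 2) := (Fintype.equivFinOfCardEq (by simp)).symm
  have hG : ∀ g : Fin d → ZMod 2, g + g = 0 := fun g =>
    funext fun j => CharTwo.add_self_eq_zero (g j)
  refine ⟨{a | syndrome e a = 0}, fun y => ⟨flipAt y (e.symm (syndrome e y)), ⟨?_, ?_⟩, ?_⟩⟩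
  · have h := syndrome_flip_add hG e y (e.symm (syndrome e y))
    simpa using h
  · exact (hammingDist_eq_one_iff_flipAt _ _).2 ⟨_, rfl⟩
  · rintro a ⟨ha, hya⟩
    obtain ⟨i, rfl⟩ := (hammingDist_eq_one_iff_flipAt _ _).1 hya
    have h := syndrome_flip_add hG e y i
    rw [show syndrome e (flipAt y i) = 0 from ha, zero_add] at h
    rw [h, Equiv.symm_apply_apply]
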